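/- arXiv:1001.4701 — 2 statements merged into one kernel-verified Lean document; each statement's English description precedes it below -/
import Mathlib

section
/- Let A₁, A₂ and B₁,…,B_k be elements of an associative algebra satisfying [[A_i, B_j], B_{j'}] = 0 for all i ∈ {1,2} and all j ≠ j'. Then [A₁⋄A₂, Sym_k(B₁,…,B_k)] = Σ_{i=1}^{k} { Sym_{k+1}(A₁, B₁,…,[A₂,B_i],…,B_k) + Sym_{k+1}(A₂, B₁,…,[A₁,B_i],…,B_k) }. -/
/-- Commutator in an associative ring. -/
def brk {A : Type*} [Ring A] (a b : A) : A := a * b - b * a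

/-- Symmetrized product of two elements. -/
def dia {A : Type*} [Ring A] [Algebra ℚ A] (a b : A) : A := (2⁻¹ : ℚ) • (a * b + b * a)

/-- Fully symmetrized product of a list of elements: the average of the products
over all orderings of the list. -/
def symP {A : Type*} [Ring A] [Algebra ℚ A] (L : List A) : A :=
  ((L.length.factorial : ℚ)⁻¹) • ((L.permutations.map List.prod).sum)

/-
Two facts about symmetrized products carry the proof. A commutator is a derivation, so
`[a₂, Sym(a₁, B)]` is `Sym([a₂, a₁], B)` plus the sum of the `Sym(a₁, …, [a₂, B_i], …)`; on adding
the same identity with `a₁` and `a₂` exchanged, the terms `Sym([a₂, a₁], B)` and `Sym([a₁, a₂], B)`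
cancel, so the right-hand side is `[a₂, Sym(a₁, B)] + [a₁, Sym(a₂, B)]`. The double commutator
hypothesis makes `Sym(a, B)` collapse to `a ⋄ Sym(B)`: the average position of `a` in a product is
the middle one, and each `[a, B_i]` crossed on moving `a` commutes with the remaining factors.
It remains to check `[a₁ ⋄ a₂, P] = [a₂, a₁ ⋄ P] + [a₁, a₂ ⋄ P]` for `P = Sym(B)`.
-/

section Orderings

variable {ι A : Type*}

/-- The orderings of a finite set, as lists. -/
def orderings (S : Finset ι) : Finset (List ι) :=
  ⟨S.val.lists, Multiset.lists_nodup_finset S⟩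

theorem mem_orderings {S : Finset ι} {l : List ι} : l ∈ orderings S ↔ S.val = l :=
  Multiset.mem_lists_iff S.val l

variable [Semiring A]

/-- The sum of the products of the family `f` over all orderings of `S`. -/
def permSum (f : ι → A) (S : Finset ι) : A :=
  ∑ l ∈ orderings S, (l.map f).prod

@[simp]
theorem permSum_empty (f : ι → A) : permSum f ∅ = 1 := by
  simp [permSum, orderings, ← Multiset.coe_nil]

theorem permSum_congr {f g : ι → A} {S : Finset ι} (h : ∀ i ∈ S, f i = g i) :
    permSum f S = permSum g S := by
  refine Finset.sum_congr rfl fun l hl => congrArg List.prod ?_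
  refine List.map_congr_left fun i hi => h i ?_
  rwa [← Finset.mem_val, mem_orderings.1 hl, Multiset.mem_coe]

theorem permSum_map {κ : Type*} (f : κ → A) (e : ι ↪ κ) (S : Finset ι) :
    permSum f (S.map e) = permSum (f ∘ e) S := by
  have lists_map (s : Multiset ι) : (s.map e).lists = s.lists.map (List.map e) := by
    induction s using Quotient.inductionOn with
    | h l => exact congrArg _ (List.map_permutations e l).symm
  simp only [permSum, orderings, Finset.sum, Finset.map_val, lists_map, Multiset.map_map,
    Function.comp_apply, List.map_map]

variable [DecidableEq ι]

theorem permSum_eq_sum_mul_permSum_erase (f : ι → A) {S : Finset ι} (hS : S.Nonempty) :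
    permSum f S = ∑ i ∈ S, f i * permSum f (S.erase i) := by
  simp only [permSum, Finset.mul_sum, Finset.sum_sigma']
  symm
  refine Finset.sum_nbij (fun p : (_ : ι) × List ι => p.1 :: p.2) ?_ ?_ ?_ fun p _ => by simp
  · rintro ⟨i, l⟩ hp
    obtain ⟨hi, hl⟩ := Finset.mem_sigma.1 hp
    rw [mem_orderings, Finset.erase_val] at hl
    rw [mem_orderings, ← Multiset.cons_coe, ← hl, Multiset.cons_erase hi]
  · rintro ⟨i, l⟩ - ⟨j, m⟩ - h
    simpa using h
  · rintro (_ | ⟨i, l⟩) hl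
    · exact absurd (mem_orderings.1 hl) (by simpa using hS.ne_empty)
    · have hval : S.val = i ::ₘ l := mem_orderings.1 hl
      refine ⟨⟨i, l⟩, Finset.mem_coe.2 (Finset.mem_sigma.2 ⟨?_, mem_orderings.2 ?_⟩), rfl⟩
      · rw [← Finset.mem_val, hval]
        exact Multiset.mem_cons_self i _
      · rw [Finset.erase_val, hval, Multiset.erase_cons_head]

theorem permSum_insert (f : ι → A) {o : ι} {S : Finset ι} (ho : o ∉ S) :
    permSum f (insert o S)
      = f o * permSum f S + ∑ i ∈ S, f i * permSum f (insert o (S.erase i)) := by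
  rw [permSum_eq_sum_mul_permSum_erase f (Finset.insert_nonempty o S), Finset.sum_insert ho,
    Finset.erase_insert ho]
  congr 1
  refine Finset.sum_congr rfl fun i hi => ?_
  rw [Finset.erase_insert_of_ne (ne_of_mem_of_not_mem hi ho).symm]

theorem permSum_insert_of_commute {f : ι → A} {o : ι} {S : Finset ι} (ho : o ∉ S)
    (h : ∀ i ∈ S, Commute (f o) (f i)) :
    permSum f (insert o S) = (S.card + 1) • (f o * permSum f S) := by
  induction S using Finset.strongInduction with
  | H S ih =>
    rcases S.eq_empty_or_nonempty with rfl | hS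
    · simp [permSum_eq_sum_mul_permSum_erase]
    have tail : ∀ i ∈ S, f i * permSum f (insert o (S.erase i))
        = S.card • (f o * (f i * permSum f (S.erase i))) := by
      intro i hi
      rw [ih _ (Finset.erase_ssubset hi) (mt Finset.mem_of_mem_erase ho)
        fun j hj => h j (Finset.mem_of_mem_erase hj), Finset.card_erase_add_one hi,
        mul_smul_comm, ← mul_assoc, ← mul_assoc, (h i hi).eq]
    rw [permSum_insert f ho, Finset.sum_congr rfl tail, ← Finset.smul_sum, ← Finset.mul_sum,
      ← permSum_eq_sum_mul_permSum_erase f hS, succ_nsmul']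

theorem sum_prod_permutations_map (f : ι → A) {L : List ι} (hL : L.Nodup) :
    ((L.map f).permutations.map List.prod).sum = permSum f L.toFinset := by
  have hords : (orderings L.toFinset).val = L.permutations := by
    simp only [orderings, List.toFinset_val, hL.dedup, Multiset.lists_coe]
  rw [← List.map_permutations, List.map_map, permSum, Finset.sum, hords, Multiset.map_coe,
    Multiset.sum_coe, Function.comp_def]

end Orderings

section Commutator

variable {ι A : Type*} [Ring A]

theorem brk_mul (a x y : A) : brk a (x * y) = brk a x * y + x * brk a y := by
  simp only [brk]
  noncomm_ring

theorem brk_sum (a : A) (S : Finset ι) (g : ι → A) :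
    brk a (∑ i ∈ S, g i) = ∑ i ∈ S, brk a (g i) := by
  simp only [brk, Finset.mul_sum, Finset.sum_mul, Finset.sum_sub_distrib]

theorem brk_smul [Algebra ℚ A] (a : A) (r : ℚ) (x : A) : brk a (r • x) = r • brk a x := by
  simp only [brk, mul_smul_comm, smul_mul_assoc, smul_sub]

variable [DecidableEq ι]

theorem permSum_update_neg (f : ι → A) {o : ι} {S : Finset ι} (ho : o ∈ S) :
    permSum (Function.update f o (-f o)) S = -permSum f S := by
  induction S using Finset.strongInduction with
  | H S ih =>
    rw [permSum_eq_sum_mul_permSum_erase _ ⟨o, ho⟩, permSum_eq_sum_mul_permSum_erase f ⟨o, ho⟩,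
      ← Finset.sum_neg_distrib]
    refine Finset.sum_congr rfl fun i hi => ?_
    rcases eq_or_ne i o with rfl | hio
    · rw [Function.update_self, neg_mul,
        permSum_congr fun j hj => Function.update_of_ne (Finset.ne_of_mem_erase hj) _ _]
    · rw [Function.update_of_ne hio, ih _ (Finset.erase_ssubset hi)
        (Finset.mem_erase.2 ⟨hio.symm, ho⟩), mul_neg]

theorem brk_prod_map (a : A) (f : ι → A) {l : List ι} (hl : l.Nodup) :
    brk a (l.map f).prod
      = (l.map fun i => (l.map (Function.update f i (brk a (f i)))).prod).sum := by
  induction l with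
  | nil => simp [brk]
  | cons j l ih =>
    obtain ⟨hj, hl⟩ := List.nodup_cons.1 hl
    have head : l.map (Function.update f j (brk a (f j))) = l.map f :=
      List.map_congr_left fun i hi => Function.update_of_ne (ne_of_mem_of_not_mem hi hj) _ _
    have tail : ∀ i ∈ l, Function.update f i (brk a (f i)) j = f j := fun i hi =>
      Function.update_of_ne (ne_of_mem_of_not_mem hi hj).symm _ _
    rw [List.map_cons, List.prod_cons, brk_mul, ih hl, List.map_cons, List.sum_cons, List.map_cons,
      List.prod_cons, head, Function.update_self, ← List.sum_map_mul_left]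
    congr 2
    refine List.map_congr_left fun i hi => ?_
    rw [List.map_cons, List.prod_cons, tail i hi]

theorem brk_permSum (a : A) (f : ι → A) (S : Finset ι) :
    brk a (permSum f S) = ∑ i ∈ S, permSum (Function.update f i (brk a (f i))) S := by
  simp only [permSum, brk_sum]
  rw [Finset.sum_comm]
  refine Finset.sum_congr rfl fun l hl => ?_
  have hS := mem_orderings.1 hl
  rw [brk_prod_map a f (Multiset.coe_nodup.1 (hS ▸ S.nodup)), Finset.sum, hS, Multiset.map_coe,
    Multiset.sum_coe]

theorem brk_permSum_of_pairwise_commute {a : A} {f : ι → A} {S : Finset ι}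
    (h : (S : Set ι).Pairwise fun i j => Commute (brk a (f i)) (f j)) :
    brk a (permSum f S) = S.card • ∑ i ∈ S, brk a (f i) * permSum f (S.erase i) := by
  rw [brk_permSum, Finset.smul_sum]
  refine Finset.sum_congr rfl fun i hi => ?_
  set g := Function.update f i (brk a (f i))
  have hgi : g i = brk a (f i) := Function.update_self ..
  have hgj : ∀ j ∈ S.erase i, g j = f j := fun j hj =>
    Function.update_of_ne (Finset.ne_of_mem_erase hj) _ _
  have hcomm : ∀ j ∈ S.erase i, Commute (g i) (g j) := fun j hj => by
    rw [hgi, hgj j hj]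
    exact h hi (Finset.mem_of_mem_erase hj) (Finset.ne_of_mem_erase hj).symm
  rw [← Finset.insert_erase hi, permSum_insert_of_commute (Finset.notMem_erase i S) hcomm, hgi,
    permSum_congr hgj, Finset.card_erase_add_one hi, Finset.insert_erase hi]

theorem two_nsmul_permSum_insert {f : ι → A} {o : ι} {S : Finset ι} (ho : o ∉ S)
    (h : (S : Set ι).Pairwise fun i j => Commute (brk (f o) (f i)) (f j)) :
    2 • permSum f (insert o S)
      = (S.card + 1) • (f o * permSum f S + permSum f S * f o) := by
  induction S using Finset.strongInduction with
  | H S ih =>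
    rcases S.eq_empty_or_nonempty with rfl | hS
    · simp [permSum_eq_sum_mul_permSum_erase, two_mul]
    have tail : ∀ i ∈ S, 2 • (f i * permSum f (insert o (S.erase i)))
        = S.card • (f o * (f i * permSum f (S.erase i)) - brk (f o) (f i) * permSum f (S.erase i)
          + f i * permSum f (S.erase i) * f o) := by
      intro i hi
      rw [← mul_smul_comm, ih _ (Finset.erase_ssubset hi) (mt Finset.mem_of_mem_erase ho)
        (h.mono (Finset.erase_subset i S)), Finset.card_erase_add_one hi, mul_smul_comm, brk]
      congr 1
      noncomm_ring
    rw [permSum_insert f ho, smul_add, Finset.smul_sum, Finset.sum_congr rfl tail,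
      ← Finset.smul_sum, Finset.sum_add_distrib, Finset.sum_sub_distrib, ← Finset.mul_sum,
      ← Finset.sum_mul, ← permSum_eq_sum_mul_permSum_erase f hS, smul_add, smul_sub,
      ← brk_permSum_of_pairwise_commute h, brk]
    module

theorem two_nsmul_permSum_cons {k : ℕ} {a : A} {B : Fin k → A}
    (h : Pairwise fun i j => Commute (brk a (B i)) (B j)) :
    2 • permSum (Fin.cons a B : Fin (k + 1) → A) Finset.univ
      = (k + 1) • (a * permSum B Finset.univ + permSum B Finset.univ * a) := by
  set C : Fin (k + 1) → A := Fin.cons a B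
  set S : Finset (Fin (k + 1)) := Finset.univ.map (Fin.succEmb k)
  have hcomm : (S : Set (Fin (k + 1))).Pairwise fun i j => Commute (brk (C 0) (C i)) (C j) := by
    simp only [S, Finset.coe_map, Finset.coe_univ, Set.image_univ]
    rintro _ ⟨i, rfl⟩ _ ⟨j, rfl⟩ hij
    exact h (ne_of_apply_ne _ hij)
  have huniv : Finset.univ = insert 0 S := by
    rw [Fin.univ_succ, Finset.cons_eq_insert]
    rfl
  have hS : permSum C S = permSum B Finset.univ := permSum_map C (Fin.succEmb k) Finset.univ
  have hC : C 0 = a := rfl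
  rw [huniv, two_nsmul_permSum_insert (by simp [S]) hcomm, hS, hC, Finset.card_map,
    Finset.card_univ, Fintype.card_fin]

end Commutator

section SymP

variable {A : Type*} [Ring A] [Algebra ℚ A]

theorem symP_ofFn {k : ℕ} (f : Fin k → A) :
    symP (List.ofFn f) = ((k.factorial : ℚ)⁻¹) • permSum f Finset.univ := by
  rw [symP, List.length_ofFn, List.ofFn_eq_map,
    sum_prod_permutations_map f (List.nodup_finRange k), List.toFinset_finRange]

theorem symP_cons_ofFn {k : ℕ} (a : A) (B : Fin k → A) :
    symP (a :: List.ofFn B)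
      = (((k + 1).factorial : ℚ)⁻¹) • permSum (Fin.cons a B : Fin (k + 1) → A) Finset.univ := by
  rw [← symP_ofFn, List.ofFn_succ, Fin.cons_zero]
  simp only [Fin.cons_succ]

theorem symP_neg_cons_ofFn {k : ℕ} (a : A) (B : Fin k → A) :
    symP (-a :: List.ofFn B) = -symP (a :: List.ofFn B) := by
  have h := permSum_update_neg (Fin.cons a B : Fin (k + 1) → A) (Finset.mem_univ 0)
  rw [Fin.cons_zero, Fin.update_cons_zero] at h
  rw [symP_cons_ofFn, symP_cons_ofFn, h, smul_neg]

theorem symP_cons_ofFn_eq_dia {k : ℕ} {a : A} {B : Fin k → A}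
    (h : Pairwise fun i j => Commute (brk a (B i)) (B j)) :
    symP (a :: List.ofFn B) = dia a (symP (List.ofFn B)) := by
  have key : (2 : ℚ) • permSum (Fin.cons a B : Fin (k + 1) → A) Finset.univ
      = (k + 1 : ℚ) • (a * permSum B Finset.univ + permSum B Finset.univ * a) := by
    exact_mod_cast two_nsmul_permSum_cons h
  rw [symP_cons_ofFn, symP_ofFn, dia, mul_smul_comm, smul_mul_assoc, ← smul_add,
    ← inv_smul_smul₀ (two_ne_zero (α := ℚ)) (permSum (Fin.cons a B) _), key, smul_smul, smul_smul,
    smul_smul, Nat.factorial_succ]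
  congr 1
  push_cast
  field_simp

theorem brk_symP_cons_ofFn {k : ℕ} (b a : A) (B : Fin k → A) :
    brk b (symP (a :: List.ofFn B)) = symP (brk b a :: List.ofFn B)
      + ∑ i, symP (a :: List.ofFn (Function.update B i (brk b (B i)))) := by
  simp only [symP_cons_ofFn, brk_smul, brk_permSum, Fin.sum_univ_succ, Fin.cons_zero,
    Fin.cons_succ, Fin.update_cons_zero, ← Fin.cons_update, smul_add, Finset.smul_sum]

theorem brk_dia (a₁ a₂ x : A) :
    brk (dia a₁ a₂) x = brk a₂ (dia a₁ x) + brk a₁ (dia a₂ x) := by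
  simp only [brk, dia, mul_smul_comm, smul_mul_assoc, ← smul_sub, ← smul_add]
  congr 1
  noncomm_ring

end SymP

theorem stmt8 {A : Type*} [Ring A] [Algebra ℚ A] {k : ℕ} (a₁ a₂ : A) (B : Fin k → A)
    (h : ∀ a ∈ ({a₁, a₂} : Set A), ∀ j j' : Fin k, j ≠ j' →
      brk (brk a (B j)) (B j') = 0) :
    brk (dia a₁ a₂) (symP (List.ofFn B))
      = ∑ i : Fin k,
          (symP (a₁ :: List.ofFn (Function.update B i (brk a₂ (B i))))
            + symP (a₂ :: List.ofFn (Function.update B i (brk a₁ (B i))))) := by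
  have dia_symP (a : A) (ha : a ∈ ({a₁, a₂} : Set A)) :
      symP (a :: List.ofFn B) = dia a (symP (List.ofFn B)) :=
    symP_cons_ofFn_eq_dia fun j j' hj => sub_eq_zero.1 (h a ha j j' hj)
  have cancel : symP (brk a₁ a₂ :: List.ofFn B) = -symP (brk a₂ a₁ :: List.ofFn B) := by
    rw [← symP_neg_cons_ofFn, brk, brk, neg_sub]
  rw [brk_dia, ← dia_symP a₁ (by simp), ← dia_symP a₂ (by simp), brk_symP_cons_ofFn,
    brk_symP_cons_ofFn, cancel, Finset.sum_add_distrib]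
  abel
end

section
/- Let L₁,…,L_l and M₁,…,M_m be elements of an associative algebra such that each commutator [L_i, M_j] = d_{ij}·1 is a central scalar multiple of the identity. Then Sym_l(L₁,…,L_l)·Sym_m(M₁,…,M_m) = Σ_{h=0}^{min(l,m)} Σ_{I,J,π} 2^{−h} d_{i₁ j_{π(1)}}⋯d_{i_h j_{π(h)}} Sym_{l+m−2h}(L's with indices outside I, M's with indices outside J), where I ranges over h-element subsets of {1,…,l}, J over h-element subsets of {1,…,m}, and π over bijections from I to J (Wick-type formula for symmetrized products). -/
/-!
`Sym a S`, the symmetrized product of the `a x` with `x ∈ S`, satisfies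
`|S| Sym a S = ∑ x ∈ S, a x * Sym a (S \ {x})`: split the orderings by their first factor. If the
commutators `[a i, b j] = d i j` are scalars, it follows that
`Sym a I * b j = b j * Sym a I + ∑ i ∈ I, d i j • Sym a (I \ {i})`, so that
`W I J = Sym a I * Sym b J` obeys the recursion
```
(|I| + |J|) W I J = ∑ i, a i * W (I \ {i}) J + ∑ j, b j * W I (J \ {j})
  + ∑ i, ∑ j, d i j • W (I \ {i}) (J \ {j}).
```
Wick's sum obeys the same recursion. In the term contracting `P ⊆ I` with `Q ⊆ J`, where
`|P| = |Q| = h`, write `|I| + |J| = |I \ P| + |J \ Q| + 2 h`. The first two summands split the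
symmetrized product of the surviving factors, and `2 h` meets the factor `2⁻ʰ` in the expansion of
the permanent of `d` on `P × Q` along each of its rows. Induction on `|I| + |J|` concludes.
-/

open Finset

section FinsetCombinatorics

variable {ι κ X : Type*}

theorem erase_sdiff_erase_of_mem [DecidableEq ι] {S T : Finset ι} {x : ι} (hx : x ∈ T) :
    S.erase x \ T.erase x = S \ T := by
  grind

theorem lists_val_eq_bind [DecidableEq ι] {S : Finset ι} (hS : S.Nonempty) :
    S.val.lists = S.val.bind fun x => (S.erase x).val.lists.map (List.cons x) := by
  refine (Multiset.Nodup.ext (Multiset.lists_nodup_finset S) ?_).mpr fun t => ?_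
  · refine Multiset.nodup_bind.mpr ⟨fun x _ => ?_, ?_⟩
    · exact (Multiset.lists_nodup_finset _).map List.cons_injective
    · refine S.nodup.pairwise fun x _ y _ hxy => Multiset.disjoint_left.mpr ?_
      simp only [Multiset.mem_map]
      rintro _ ⟨s, -, rfl⟩ ⟨t, -, h⟩
      exact hxy (List.cons.inj h).1.symm
  · cases t with
    | nil => simpa using hS.ne_empty
    | cons y t =>
      simp only [Multiset.mem_bind, Multiset.mem_map, Multiset.mem_lists_iff, erase_val,
        Multiset.quot_mk_to_coe, List.cons.injEq, mem_val, ← Multiset.cons_coe]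
      constructor
      · intro h
        exact ⟨y, by simp [← mem_val, h], t, by simp [h], rfl, rfl⟩
      · rintro ⟨_, hx, _, ht, rfl, rfl⟩
        rw [← ht, Multiset.cons_erase hx]

variable [AddCommMonoid X]

theorem sum_equiv_option {α β : Type*} [Fintype α] [Fintype β] [DecidableEq α] [DecidableEq β]
    (F : (Option α ≃ β) → X) :
    ∑ σ, F σ = ∑ b, ∑ τ : α ≃ {y // y ≠ b}, F ((Equiv.optionSubtype b).symm τ).1 := by
  rw [← Fintype.sum_fiberwise (fun σ => σ none)]
  refine sum_congr rfl fun b _ => ?_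
  rw [← (Equiv.optionSubtype b).symm.sum_comp]

theorem sum_sum_erase_comm [DecidableEq ι] (S : Finset ι) (f : ι → ι → X) :
    ∑ x ∈ S, ∑ z ∈ S.erase x, f x z = ∑ z ∈ S, ∑ x ∈ S.erase z, f x z :=
  sum_comm' fun x z => by simp only [mem_erase]; tauto

theorem sum_powerset_sum_sdiff [DecidableEq ι] (S : Finset ι) (F : ι → Finset ι → X) :
    ∑ T ∈ S.powerset, ∑ x ∈ S \ T, F x T = ∑ x ∈ S, ∑ T ∈ (S.erase x).powerset, F x T :=
  sum_comm' fun T x => by simp only [mem_powerset, mem_sdiff, subset_erase]; tauto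

theorem sum_powerset_sum_mem [DecidableEq ι] (S : Finset ι) (F : ι → Finset ι → X) :
    ∑ T ∈ S.powerset, ∑ x ∈ T, F x (T.erase x) =
      ∑ x ∈ S, ∑ T ∈ (S.erase x).powerset, F x T := by
  rw [sum_sigma', sum_sigma']
  refine sum_bij' (fun p _ => ⟨p.2, p.1.erase p.2⟩) (fun p _ => ⟨insert p.1 p.2, p.1⟩)
    ?_ ?_ ?_ ?_ fun _ _ => rfl
  all_goals
    simp only [mem_sigma, mem_powerset, subset_erase]
    rintro ⟨_, _⟩ ⟨h, h'⟩
  · exact ⟨h h', (erase_subset _ _).trans h, notMem_erase _ _⟩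
  · exact ⟨insert_subset h h'.1, mem_insert_self _ _⟩
  · simp [insert_erase h']
  · simp [erase_insert h'.2]

theorem sum_powerset_powerset_eq_sum_powersetCard (S : Finset ι) (T : Finset κ)
    {F : Finset ι → Finset κ → X} (hF : ∀ I J, #I ≠ #J → F I J = 0) :
    ∑ I ∈ S.powerset, ∑ J ∈ T.powerset, F I J =
      ∑ h ∈ range (min #S #T + 1), ∑ I ∈ S.powersetCard h, ∑ J ∈ T.powersetCard h, F I J := by
  have inner : ∀ h, ∀ I ∈ S.powersetCard h,
      ∑ J ∈ T.powerset, F I J = ∑ J ∈ T.powersetCard h, F I J := by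
    intro h I hI
    obtain ⟨-, rfl⟩ := mem_powersetCard.mp hI
    simp only [powersetCard_eq_filter]
    refine (sum_filter_of_ne fun J _ hJ => ?_).symm
    by_contra hne
    exact hJ (hF I J (Ne.symm hne))
  rw [sum_powerset]
  simp only [sum_congr rfl (inner _)]
  refine (sum_subset (range_mono (by omega)) fun h hS hST => ?_).symm
  have hT : #T < h := by simp only [mem_range] at hS hST; omega
  simp only [powersetCard_eq_empty.mpr hT, sum_empty, sum_const_zero]

end FinsetCombinatorics

section SymmetrizedProduct

variable {ι A : Type*} [Ring A] [Algebra ℚ A]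

theorem symP_eq_of_perm {s t : List A} (h : s.Perm t) : symP s = symP t := by
  rw [symP, symP, h.length_eq, (h.permutations.map List.prod).sum_eq]

/-- The symmetrized product `Sym(a x | x ∈ S)` of a family indexed by a finite set. As `symP` does
not depend on the order of its arguments, `S` may be listed arbitrarily. -/
noncomputable def symProd (a : ι → A) (S : Finset ι) : A :=
  symP (S.toList.map a)

theorem symP_map_eq_symProd (a : ι → A) {s : List ι} {S : Finset ι}
    (h : (s : Multiset ι) = S.val) : symP (s.map a) = symProd a S :=
  symP_eq_of_perm <| .map a <| Multiset.coe_eq_coe.mp <| h.trans S.coe_toList.symm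

@[simp]
theorem symProd_empty (a : ι → A) : symProd a ∅ = 1 := by
  simp [symProd, symP]

theorem factorial_nsmul_symProd (a : ι → A) (S : Finset ι) :
    (#S).factorial • symProd a S = (S.val.lists.map fun t => (t.map a).prod).sum := by
  rw [symProd, symP, List.length_map, length_toList, ← Nat.cast_smul_eq_nsmul ℚ, smul_smul,
    mul_inv_cancel₀ (by positivity), one_smul, ← List.map_permutations, List.map_map]
  conv_rhs => rw [← S.coe_toList, Multiset.lists_coe, Multiset.map_coe, Multiset.sum_coe]
  rfl

variable [DecidableEq ι]

theorem card_nsmul_symProd (a : ι → A) (S : Finset ι) :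
    #S • symProd a S = ∑ x ∈ S, a x * symProd a (S.erase x) := by
  rcases S.eq_empty_or_nonempty with rfl | hS
  · simp
  have := IsAddTorsionFree.of_module_rat A
  refine nsmul_right_injective (Nat.factorial_ne_zero (#S - 1)) ?_
  calc (#S - 1).factorial • #S • symProd a S
      = (S.val.lists.map fun t => (t.map a).prod).sum := by
        rw [← factorial_nsmul_symProd, smul_smul, mul_comm,
          Nat.mul_factorial_pred hS.card_pos.ne']
    _ = ∑ x ∈ S, a x * ((S.erase x).val.lists.map fun t => (t.map a).prod).sum := by
        rw [lists_val_eq_bind hS, Multiset.map_bind, Multiset.sum_bind]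
        simp only [Multiset.map_map, Function.comp_def, List.map_cons, List.prod_cons,
          Multiset.sum_map_mul_left]
        rfl
    _ = (#S - 1).factorial • ∑ x ∈ S, a x * symProd a (S.erase x) := by
        rw [smul_sum]
        refine sum_congr rfl fun x hx => ?_
        rw [← factorial_nsmul_symProd, card_erase_of_mem hx, mul_smul_comm]

variable {R : Type*} [CommSemiring R] [Algebra R A]

theorem symProd_mul_eq_mul_symProd_add {a : ι → A} {y : A} {c : ι → R}
    (h : ∀ x, a x * y = y * a x + c x • 1) (S : Finset ι) :
    symProd a S * y = y * symProd a S + ∑ x ∈ S, c x • symProd a (S.erase x) := by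
  induction S using Finset.strongInduction with
  | H S ih =>
  rcases S.eq_empty_or_nonempty with rfl | hS
  · simp
  have := IsAddTorsionFree.of_module_rat A
  refine nsmul_right_injective hS.card_pos.ne' ?_
  have head : ∑ x ∈ S, a x * (y * symProd a (S.erase x)) =
      y * #S • symProd a S + ∑ x ∈ S, c x • symProd a (S.erase x) := by
    simp only [card_nsmul_symProd, mul_sum, ← sum_add_distrib, ← mul_assoc, h, add_mul,
      smul_mul_assoc, one_mul]
  have tail : ∑ x ∈ S, a x * ∑ z ∈ S.erase x, c z • symProd a ((S.erase x).erase z) =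
      (#S - 1) • ∑ z ∈ S, c z • symProd a (S.erase z) := by
    simp only [mul_sum, mul_smul_comm]
    rw [sum_sum_erase_comm, smul_sum]
    refine sum_congr rfl fun z hz => ?_
    rw [← smul_comm (c z), ← card_erase_of_mem hz, card_nsmul_symProd, smul_sum]
    simp only [erase_right_comm]
  calc #S • (symProd a S * y)
      = ∑ x ∈ S, a x * (symProd a (S.erase x) * y) := by
        rw [← smul_mul_assoc, card_nsmul_symProd, sum_mul]
        simp only [mul_assoc]
    _ = ∑ x ∈ S, a x * (y * symProd a (S.erase x)) +
          ∑ x ∈ S, a x * ∑ z ∈ S.erase x, c z • symProd a ((S.erase x).erase z) := by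
        rw [← sum_add_distrib]
        exact sum_congr rfl fun x hx => by rw [ih _ (erase_ssubset hx), mul_add]
    _ = #S • (y * symProd a S + ∑ x ∈ S, c x • symProd a (S.erase x)) := by
        rw [head, tail, add_assoc, ← succ_nsmul', Nat.sub_add_cancel hS.card_pos, smul_add,
          mul_smul_comm]

end SymmetrizedProduct

section PairingSum

variable {ι κ R : Type*} [DecidableEq ι] [DecidableEq κ] [CommSemiring R]

/-- The sum over all bijections `σ : I ≃ J` of `∏ d i (σ i)`, that is, the permanent of the block
`I × J` of `d`. It is zero unless `I` and `J` have the same cardinality. -/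
def pairingSum (d : ι → κ → R) (I : Finset ι) (J : Finset κ) : R :=
  ∑ σ : I ≃ J, ∏ i : I, d i (σ i)

theorem pairingSum_eq_zero_of_card_ne (d : ι → κ → R) {I : Finset ι} {J : Finset κ}
    (h : #I ≠ #J) : pairingSum d I J = 0 :=
  have : IsEmpty (I ≃ J) := ⟨fun σ => h (card_eq_of_equiv σ)⟩
  Fintype.sum_empty _

theorem pairingSum_eq_sum_equiv {α β : Type*} [Fintype α] [Fintype β] [DecidableEq α]
    [DecidableEq β] (d : ι → κ → R) {I : Finset ι} {J : Finset κ} (e : α ≃ I) (f : β ≃ J) :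
    pairingSum d I J = ∑ π : α ≃ β, ∏ r, d (e r) (f (π r)) := by
  rw [pairingSum, ← (e.equivCongr f).sum_comp]
  refine sum_congr rfl fun π _ => ?_
  rw [← e.prod_comp]
  simp

@[simp]
theorem pairingSum_empty (d : ι → κ → R) : pairingSum d ∅ ∅ = 1 := by
  simp [pairingSum_eq_sum_equiv d (Equiv.equivOfIsEmpty (Fin 0) _) (Equiv.equivOfIsEmpty (Fin 0) _)]

theorem pairingSum_insert (d : ι → κ → R) {I : Finset ι} (J : Finset κ) {i : ι} (hi : i ∉ I) :
    pairingSum d (insert i I) J = ∑ j ∈ J, d i j * pairingSum d I (J.erase j) := by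
  have eraseEquiv (j : J) : ∃ f : {y // y ≠ j} ≃ J.erase j, ∀ y, (f y : κ) = y :=
    ⟨{ toFun y := ⟨y, mem_erase.mpr ⟨fun h => y.2 (Subtype.ext h), y.1.2⟩⟩
       invFun y :=
         ⟨⟨y, mem_of_mem_erase y.2⟩, fun h => ne_of_mem_erase y.2 (congrArg Subtype.val h)⟩ },
      fun _ => rfl⟩
  rw [pairingSum_eq_sum_equiv d (subtypeInsertEquivOption hi).symm (Equiv.refl J),
    sum_equiv_option, ← sum_coe_sort J]
  refine sum_congr rfl fun j _ => ?_
  obtain ⟨f, hf⟩ := eraseEquiv j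
  rw [pairingSum_eq_sum_equiv d (Equiv.refl I) f, mul_sum]
  refine sum_congr rfl fun τ _ => ?_
  rw [Fintype.prod_option]
  simp [hf, subtypeInsertEquivOption]

theorem card_nsmul_pairingSum (d : ι → κ → R) (I : Finset ι) (J : Finset κ) :
    #I • pairingSum d I J =
      ∑ i ∈ I, ∑ j ∈ J, d i j * pairingSum d (I.erase i) (J.erase j) := by
  rw [← sum_const (pairingSum d I J)]
  refine sum_congr rfl fun i hi => ?_
  rw [← pairingSum_insert d J (notMem_erase i I), insert_erase hi]

theorem card_add_card_nsmul_pairingSum (d : ι → κ → R) (I : Finset ι) (J : Finset κ) :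
    (#I + #J) • pairingSum d I J =
      2 • ∑ i ∈ I, ∑ j ∈ J, d i j * pairingSum d (I.erase i) (J.erase j) := by
  rw [← card_nsmul_pairingSum, smul_smul]
  by_cases h : #I = #J
  · rw [← h, two_mul]
  · simp only [pairingSum_eq_zero_of_card_ne d h, smul_zero]

end PairingSum

section WickExpansion

variable {ι κ R A : Type*} [DecidableEq ι] [DecidableEq κ] [CommSemiring R] [Ring A] [Algebra ℚ A]
  [Algebra R A]

theorem card_add_card_nsmul_symProd_disjSum (a : ι → A) (b : κ → A) (I : Finset ι) (J : Finset κ) :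
    (#I + #J) • symProd (Sum.elim a b) (I.disjSum J) =
      ∑ i ∈ I, a i * symProd (Sum.elim a b) ((I.erase i).disjSum J) +
        ∑ j ∈ J, b j * symProd (Sum.elim a b) (I.disjSum (J.erase j)) := by
  have erase_inl (i : ι) : (I.disjSum J).erase (.inl i) = (I.erase i).disjSum J := by
    ext (x | x) <;> simp
  have erase_inr (j : κ) : (I.disjSum J).erase (.inr j) = I.disjSum (J.erase j) := by
    ext (x | x) <;> simp
  simp only [← card_disjSum, card_nsmul_symProd, sum_disjSum, Sum.elim_inl, Sum.elim_inr,
    erase_inl, erase_inr]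

theorem card_add_card_nsmul_symProd_mul_symProd {a : ι → A} {b : κ → A} {d : ι → κ → R}
    (h : ∀ i j, a i * b j = b j * a i + d i j • 1) (I : Finset ι) (J : Finset κ) :
    (#I + #J) • (symProd a I * symProd b J) =
      ∑ i ∈ I, a i * (symProd a (I.erase i) * symProd b J) +
        ∑ j ∈ J, b j * (symProd a I * symProd b (J.erase j)) +
          ∑ i ∈ I, ∑ j ∈ J, d i j • (symProd a (I.erase i) * symProd b (J.erase j)) := by
  rw [add_smul, ← smul_mul_assoc, ← mul_smul_comm, card_nsmul_symProd, card_nsmul_symProd,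
    sum_mul, mul_sum, add_assoc, sum_comm (s := I) (t := J), ← sum_add_distrib]
  congr 1
  · simp only [mul_assoc]
  · refine sum_congr rfl fun j _ => ?_
    rw [← mul_assoc, symProd_mul_eq_mul_symProd_add (h · j), add_mul, sum_mul, mul_assoc]
    simp only [smul_mul_assoc]

/-- The summand of the Wick expansion for `I` and `J` in which `P ⊆ I` is contracted with `Q ⊆ J`,
summed over all bijections `P ≃ Q`. -/
noncomputable def wickTerm (a : ι → A) (b : κ → A) (d : ι → κ → R) (I : Finset ι) (J : Finset κ)
    (P : Finset ι) (Q : Finset κ) : A :=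
  ((2 : ℚ) ^ #P)⁻¹ • pairingSum d P Q • symProd (Sum.elim a b) ((I \ P).disjSum (J \ Q))

/-- The right-hand side of Wick's formula for the subfamilies indexed by `I` and `J`. Pairs `P`, `Q`
of different cardinalities contribute zero. -/
noncomputable def wickSum (a : ι → A) (b : κ → A) (d : ι → κ → R) (I : Finset ι) (J : Finset κ) :
    A :=
  ∑ P ∈ I.powerset, ∑ Q ∈ J.powerset, wickTerm a b d I J P Q

theorem card_add_card_nsmul_wickTerm_contracted (a : ι → A) (b : κ → A) (d : ι → κ → R)
    (I P : Finset ι) (J Q : Finset κ) :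
    (#P + #Q) • wickTerm a b d I J P Q =
      ∑ i ∈ P, ∑ j ∈ Q, d i j • wickTerm a b d (I.erase i) (J.erase j) (P.erase i) (Q.erase j) := by
  have halve {i : ι} (hi : i ∈ P) (x : A) :
      ((2 : ℚ) ^ #P)⁻¹ • 2 • x = ((2 : ℚ) ^ #(P.erase i))⁻¹ • x := by
    rw [← card_erase_add_one hi, ← Nat.cast_smul_eq_nsmul ℚ, smul_smul]
    congr 1
    field_simp
    rw [Nat.cast_ofNat, pow_succ']
  rw [wickTerm, smul_comm, ← smul_assoc (#P + #Q), card_add_card_nsmul_pairingSum, smul_assoc,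
    sum_smul, smul_sum, smul_sum]
  refine sum_congr rfl fun i hi => ?_
  rw [halve hi, sum_smul, smul_sum]
  refine sum_congr rfl fun j hj => ?_
  rw [wickTerm, erase_sdiff_erase_of_mem hi, erase_sdiff_erase_of_mem hj, mul_smul, smul_comm]

theorem card_add_card_nsmul_wickTerm (a : ι → A) (b : κ → A) (d : ι → κ → R) {I P : Finset ι}
    {J Q : Finset κ} (hP : P ⊆ I) (hQ : Q ⊆ J) :
    (#I + #J) • wickTerm a b d I J P Q =
      ∑ i ∈ I \ P, a i * wickTerm a b d (I.erase i) J P Q +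
        ∑ j ∈ J \ Q, b j * wickTerm a b d I (J.erase j) P Q +
          ∑ i ∈ P, ∑ j ∈ Q,
            d i j • wickTerm a b d (I.erase i) (J.erase j) (P.erase i) (Q.erase j) := by
  have card_eq : #I + #J = (#(I \ P) + #(J \ Q)) + (#P + #Q) := by
    rw [← card_sdiff_add_card_eq_card hP, ← card_sdiff_add_card_eq_card hQ]
    ring
  rw [card_eq, add_smul, card_add_card_nsmul_wickTerm_contracted]
  congr 1
  simp only [wickTerm, mul_smul_comm, ← smul_sum, erase_sdiff_comm, ← smul_add]
  rw [← card_add_card_nsmul_symProd_disjSum]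
  simp only [smul_comm (#(I \ P) + #(J \ Q))]

theorem card_add_card_nsmul_wickSum (a : ι → A) (b : κ → A) (d : ι → κ → R) (I : Finset ι)
    (J : Finset κ) :
    (#I + #J) • wickSum a b d I J =
      ∑ i ∈ I, a i * wickSum a b d (I.erase i) J +
        ∑ j ∈ J, b j * wickSum a b d I (J.erase j) +
          ∑ i ∈ I, ∑ j ∈ J, d i j • wickSum a b d (I.erase i) (J.erase j) := by
  have left : ∑ P ∈ I.powerset, ∑ Q ∈ J.powerset, ∑ i ∈ I \ P,
      a i * wickTerm a b d (I.erase i) J P Q = ∑ i ∈ I, a i * wickSum a b d (I.erase i) J := by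
    simp only [wickSum, mul_sum, ← sum_powerset_sum_sdiff]
    exact sum_congr rfl fun P _ => sum_comm
  have right : ∑ P ∈ I.powerset, ∑ Q ∈ J.powerset, ∑ j ∈ J \ Q,
      b j * wickTerm a b d I (J.erase j) P Q = ∑ j ∈ J, b j * wickSum a b d I (J.erase j) := by
    simp only [wickSum, mul_sum, sum_powerset_sum_sdiff J]
    exact sum_comm
  have contracted : ∑ P ∈ I.powerset, ∑ Q ∈ J.powerset, ∑ i ∈ P, ∑ j ∈ Q,
      d i j • wickTerm a b d (I.erase i) (J.erase j) (P.erase i) (Q.erase j) =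
        ∑ i ∈ I, ∑ j ∈ J, d i j • wickSum a b d (I.erase i) (J.erase j) := by
    simp only [wickSum, smul_sum]
    simp only [sum_comm (s := J) (t := powerset _)]
    rw [← sum_powerset_sum_mem]
    refine sum_congr rfl fun P _ => ?_
    rw [sum_comm]
    refine sum_congr rfl fun i _ => ?_
    rw [← sum_powerset_sum_mem]
  rw [← left, ← right, ← contracted, wickSum, smul_sum]
  simp only [← sum_add_distrib, smul_sum]
  exact sum_congr rfl fun P hP => sum_congr rfl fun Q hQ =>
    card_add_card_nsmul_wickTerm a b d (mem_powerset.mp hP) (mem_powerset.mp hQ)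

theorem symProd_mul_symProd {a : ι → A} {b : κ → A} {d : ι → κ → R}
    (h : ∀ i j, a i * b j = b j * a i + d i j • 1) (I : Finset ι) (J : Finset κ) :
    symProd a I * symProd b J = wickSum a b d I J := by
  induction hn : #I + #J using Nat.strong_induction_on generalizing I J with
  | h n ih =>
  subst hn
  rcases (#I + #J).eq_zero_or_pos with h0 | hpos
  · obtain ⟨rfl, rfl⟩ : I = ∅ ∧ J = ∅ := by simpa using h0
    simp [wickSum, wickTerm]
  have := IsAddTorsionFree.of_module_rat A
  refine nsmul_right_injective hpos.ne' ?_
  have ih_left (i) (hi : i ∈ I) :=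
    ih _ (by gcongr; exact erase_ssubset hi) (I.erase i) J rfl
  have ih_right (j) (hj : j ∈ J) :=
    ih _ (by gcongr; exact erase_ssubset hj) I (J.erase j) rfl
  have ih_both (i) (hi : i ∈ I) (j) (hj : j ∈ J) :=
    ih _ (add_lt_add (card_erase_lt_of_mem hi) (card_erase_lt_of_mem hj))
      (I.erase i) (J.erase j) rfl
  simp only [card_add_card_nsmul_symProd_mul_symProd h, card_add_card_nsmul_wickSum]
  congr! 3 with i hi j hj i hi j hj
  · rw [ih_left i hi]
  · rw [ih_right j hj]
  · rw [ih_both i hi j hj]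

theorem wickTerm_eq_zero_of_card_ne (a : ι → A) (b : κ → A) (d : ι → κ → R) (I : Finset ι)
    (J : Finset κ) {P : Finset ι} {Q : Finset κ} (h : #P ≠ #Q) : wickTerm a b d I J P Q = 0 := by
  rw [wickTerm, pairingSum_eq_zero_of_card_ne d h, zero_smul, smul_zero]

theorem wickTerm_eq_sum_perm (a : ι → A) (b : κ → A) (d : ι → κ → R) (I : Finset ι) (J : Finset κ)
    {P : Finset ι} {Q : Finset κ} {n : ℕ} (e : Fin n ≃ P) (f : Fin n ≃ Q) :
    wickTerm a b d I J P Q = ∑ π : Equiv.Perm (Fin n), ((2 : ℚ) ^ n)⁻¹ •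
      (∏ r, d (e r) (f (π r))) • symProd (Sum.elim a b) ((I \ P).disjSum (J \ Q)) := by
  have card_eq : #P = n := by simpa using (Fintype.card_congr e).symm
  rw [wickTerm, card_eq, pairingSum_eq_sum_equiv d e f, sum_smul, smul_sum]

end WickExpansion

theorem symP_ofFn_s9 {A : Type*} [Ring A] [Algebra ℚ A] {n : ℕ} (a : Fin n → A) :
    symP (List.ofFn a) = symProd a univ := by
  rw [List.ofFn_eq_map, symP_map_eq_symProd]
  rfl

theorem symP_sort_append_sort {ι κ A : Type*} [LinearOrder ι] [LinearOrder κ] [Ring A]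
    [Algebra ℚ A] (a : ι → A) (b : κ → A) (I : Finset ι) (J : Finset κ) :
    symP ((I.sort (· ≤ ·)).map a ++ (J.sort (· ≤ ·)).map b) =
      symProd (Sum.elim a b) (I.disjSum J) := by
  have enum : (((I.sort (· ≤ ·)).map Sum.inl ++ (J.sort (· ≤ ·)).map Sum.inr : List (ι ⊕ κ)) :
      Multiset (ι ⊕ κ)) = (I.disjSum J).val := by
    rw [← Multiset.coe_add, ← Multiset.map_coe, ← Multiset.map_coe, sort_eq, sort_eq]
    rfl
  rw [← symP_map_eq_symProd _ enum]
  simp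

theorem stmt9_general {R A : Type*} [CommSemiring R] [Ring A] [Algebra ℚ A] [Algebra R A]
    {l m : ℕ} (L : Fin l → A) (M : Fin m → A) (d : Fin l → Fin m → R)
    (hd : ∀ i j, brk (L i) (M j) = d i j • (1 : A)) :
    symP (List.ofFn L) * symP (List.ofFn M) =
      ∑ h ∈ range (min l m + 1), ∑ I ∈ (powersetCard h (univ : Finset (Fin l))).attach,
        ∑ J ∈ (powersetCard h (univ : Finset (Fin m))).attach, ∑ π : Equiv.Perm (Fin h),
          ((2 : ℚ) ^ h)⁻¹ •
            (∏ r : Fin h, d (I.1.orderIsoOfFin (mem_powersetCard.mp I.2).2 r)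
              (J.1.orderIsoOfFin (mem_powersetCard.mp J.2).2 (π r))) •
            symP ((I.1ᶜ.sort (· ≤ ·)).map L ++ (J.1ᶜ.sort (· ≤ ·)).map M) := by
  rw [symP_ofFn_s9, symP_ofFn_s9, symProd_mul_symProd fun i j => sub_eq_iff_eq_add'.mp (hd i j), wickSum,
    sum_powerset_powerset_eq_sum_powersetCard _ _ fun _ _ => wickTerm_eq_zero_of_card_ne L M d _ _,
    card_fin, card_fin]
  refine sum_congr rfl fun h _ => ?_
  rw [← sum_attach]
  refine sum_congr rfl fun I _ => ?_
  rw [← sum_attach]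
  refine sum_congr rfl fun J _ => ?_
  simp only [symP_sort_append_sort, compl_eq_univ_sdiff]
  exact wickTerm_eq_sum_perm L M d univ univ
    (I.1.orderIsoOfFin (mem_powersetCard.mp I.2).2).toEquiv
    (J.1.orderIsoOfFin (mem_powersetCard.mp J.2).2).toEquiv

open Finset in
theorem stmt9 {A : Type*} [Ring A] [Algebra ℚ A] {l m : ℕ}
    (L : Fin l → A) (M : Fin m → A) (d : Fin l → Fin m → ℚ)
    (hd : ∀ i j, brk (L i) (M j) = d i j • (1 : A)) :
    symP (List.ofFn L) * symP (List.ofFn M)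
      = ∑ h ∈ Finset.range (min l m + 1),
          ∑ I ∈ (Finset.powersetCard h (Finset.univ : Finset (Fin l))).attach,
            ∑ J ∈ (Finset.powersetCard h (Finset.univ : Finset (Fin m))).attach,
              ∑ π : Equiv.Perm (Fin h),
                (((2 : ℚ) ^ h)⁻¹ *
                    ∏ r : Fin h,
                      d (I.1.orderIsoOfFin (Finset.mem_powersetCard.mp I.2).2 r)
                        (J.1.orderIsoOfFin (Finset.mem_powersetCard.mp J.2).2 (π r))) •
                  symP ((I.1ᶜ.sort (· ≤ ·)).map L ++ (J.1ᶜ.sort (· ≤ ·)).map M) := by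
  simpa only [mul_smul] using stmt9_general L M d hd
end
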